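/- Let μ be a Borel probability measure on ℝ^d satisfying the logarithmic Sobolev inequality with constant C > 0, i.e. ∫ f² log(|f|/‖f‖_{2,μ}) dμ ≤ C ∫ |∇f|² dμ for every f ∈ C¹_b(ℝ^d). Then for every f ∈ C¹_b(ℝ^d) with |∇f(x)| ≤ 1 for all x ∈ ℝ^d and every λ > 0, one has ∫_{ℝ^d} e^{2λf} dμ ≤ e^{Cλ²} (∫_{ℝ^d} e^{λf} dμ)². -/

import Mathlib

open MeasureTheory

/-- `f : ℝ^d → ℝ` is of class `C¹_b`: continuously differentiable, bounded, with
bounded gradient. -/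
def C1b {d : ℕ} (f : EuclideanSpace ℝ (Fin d) → ℝ) : Prop :=
  ContDiff ℝ 1 f ∧ (∃ M, ∀ x, |f x| ≤ M) ∧ (∃ M, ∀ x, ‖gradient f x‖ ≤ M)

/-- The `L²(μ)` norm of a real-valued function. -/
noncomputable def L2Norm {d : ℕ} (μ : Measure (EuclideanSpace ℝ (Fin d)))
    (f : EuclideanSpace ℝ (Fin d) → ℝ) : ℝ :=
  (∫ x, |f x| ^ (2 : ℝ) ∂μ) ^ ((1 : ℝ) / 2)

/-!
Herbst's argument. Applied to `exp (t f / 2)`, the logarithmic Sobolev inequality says that the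
cumulant generating function `φ t = log ∫ exp (t f) dμ` satisfies
`t φ' t - φ t ≤ (C / 2) (sup |∇f|)² t²`. The left-hand side divided by `t²` is the derivative of
`φ t / t`, so `φ t / t - (C / 2) (sup |∇f|)² t` is antitone on `t > 0`; comparing its values at `λ`
and `2λ` and exponentiating gives the bound.
-/

open ProbabilityTheory

section Calculus

lemma apply_mul_le_of_mul_deriv_le {φ : ℝ → ℝ} {a : ℝ} (hφ : Differentiable ℝ φ)
    (hderiv : ∀ t, t * deriv φ t ≤ φ t + a * t ^ 2) {s : ℝ} (hs : 1 ≤ s) (t : ℝ) :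
    φ (s * t) ≤ s * φ t + a * s * (s - 1) * t ^ 2 := by
  -- Varying `r` with `t` fixed, instead of differentiating `φ t / t`, covers all signs of `t`.
  have hasDerivAt_quotient (r : ℝ) (hr : 0 < r) :
      HasDerivAt (fun r ↦ φ (r * t) / r - a * t ^ 2 * r)
        ((deriv φ (r * t) * t * r - φ (r * t)) / r ^ 2 - a * t ^ 2) r := by
    have hcomp : HasDerivAt (fun r ↦ φ (r * t)) (deriv φ (r * t) * t) r :=
      (hφ (r * t)).hasDerivAt.comp r (hasDerivAt_mul_const t)
    simpa using (hcomp.fun_div (hasDerivAt_id' r) hr.ne').fun_sub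
      ((hasDerivAt_id' r).const_mul (a * t ^ 2))
  have quotient_anti : AntitoneOn (fun r ↦ φ (r * t) / r - a * t ^ 2 * r) (Set.Ioi 0) := by
    refine antitoneOn_of_hasDerivWithinAt_nonpos (convex_Ioi 0)
      (fun r hr ↦ (hasDerivAt_quotient r hr).continuousAt.continuousWithinAt)
      (fun r hr ↦ (hasDerivAt_quotient r (interior_subset hr)).hasDerivWithinAt) fun r hr ↦ ?_
    have hr : 0 < r := interior_subset hr
    rw [sub_nonpos, div_le_iff₀ (by positivity)]
    linarith [hderiv (r * t)]
  have hs₀ : 0 < s := by linarith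
  have hle : φ (s * t) / s - a * t ^ 2 * s ≤ φ t - a * t ^ 2 := by
    simpa using quotient_anti (Set.mem_Ioi.2 one_pos) (Set.mem_Ioi.2 hs₀) hs
  rw [sub_le_iff_le_add, div_le_iff₀ hs₀] at hle
  linarith

lemma norm_fderiv_exp_const_mul {E : Type*} [NormedAddCommGroup E] [NormedSpace ℝ E]
    {f : E → ℝ} {x : E} (hf : DifferentiableAt ℝ f x) (c : ℝ) :
    ‖fderiv ℝ (fun y ↦ Real.exp (c * f y)) x‖ = Real.exp (c * f x) * (|c| * ‖fderiv ℝ f x‖) := by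
  rw [(hf.hasFDerivAt.const_mul c).exp.fderiv, norm_smul, norm_smul, Real.norm_eq_abs,
    Real.norm_eq_abs, Real.abs_exp]

lemma norm_gradient_eq_norm_fderiv {F : Type*} [NormedAddCommGroup F] [InnerProductSpace ℝ F]
    [CompleteSpace F] (f : F → ℝ) (x : F) : ‖gradient f x‖ = ‖fderiv ℝ f x‖ :=
  LinearIsometryEquiv.norm_map _ _

lemma exp_half_mul_sq (t y : ℝ) : Real.exp (t / 2 * y) ^ 2 = Real.exp (t * y) := by
  rw [← Real.exp_nat_mul]
  ring_nf

end Calculus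

section Cumulants

variable {Ω : Type*} [MeasurableSpace Ω] {μ : Measure Ω} {X : Ω → ℝ} {t : ℝ}

lemma integral_exp_sq_mul_log_eq [NeZero μ] (ht : t ∈ interior (integrableExpSet X μ)) :
    ∫ ω, Real.exp (t / 2 * X ω) ^ 2 *
        Real.log (|Real.exp (t / 2 * X ω)| / √(∫ ω, Real.exp (t / 2 * X ω) ^ 2 ∂μ)) ∂μ
      = mgf X μ t / 2 * (t * deriv (cgf X μ) t - cgf X μ t) := by
  have hexp : Integrable (fun ω ↦ Real.exp (t * X ω)) μ :=
    integrable_of_mem_integrableExpSet (interior_subset ht)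
  have hXexp : Integrable (fun ω ↦ X ω * Real.exp (t * X ω)) μ := by
    simpa using integrable_pow_mul_exp_of_mem_interior_integrableExpSet ht 1
  have hpos : 0 < mgf X μ t := mgf_pos' (NeZero.ne μ) hexp
  have integrand_eq (ω : Ω) :
      Real.exp (t * X ω) * Real.log (Real.exp (t / 2 * X ω) / √(mgf X μ t))
        = t / 2 * (X ω * Real.exp (t * X ω)) - cgf X μ t / 2 * Real.exp (t * X ω) := by
    rw [Real.log_div (Real.exp_pos _).ne' (by positivity), Real.log_exp, Real.log_sqrt hpos.le, cgf]
    ring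
  calc
    _ = ∫ ω, Real.exp (t * X ω) * Real.log (Real.exp (t / 2 * X ω) / √(mgf X μ t)) ∂μ := by
      simp only [exp_half_mul_sq, Real.abs_exp, mgf]
    _ = t / 2 * (∫ ω, X ω * Real.exp (t * X ω) ∂μ) - cgf X μ t / 2 * mgf X μ t := by
      simp_rw [integrand_eq]
      rw [integral_sub (hXexp.const_mul _) (hexp.const_mul _), integral_const_mul,
        integral_const_mul, mgf]
    _ = mgf X μ t / 2 * (t * deriv (cgf X μ) t - cgf X μ t) := by
      rw [deriv_cgf ht]
      field_simp

end Cumulants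

section LogSobolev

variable {E : Type*} [NormedAddCommGroup E] [NormedSpace ℝ E]

/-- `f : E → ℝ` is of class `C¹_b` on a normed space. The derivative is measured in the dual norm,
which on a Euclidean space is the norm of the gradient. -/
def BoundedC1 (f : E → ℝ) : Prop :=
  ContDiff ℝ 1 f ∧ (∃ M, ∀ x, |f x| ≤ M) ∧ ∃ M, ∀ x, ‖fderiv ℝ f x‖ ≤ M

/-- The logarithmic Sobolev inequality with constant `C` for a measure `μ` on a normed space,
tested on functions of class `C¹_b`. -/
def SatisfiesLSI [MeasurableSpace E] (μ : Measure E) (C : ℝ) : Prop :=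
  ∀ f : E → ℝ, BoundedC1 f →
    ∫ x, f x ^ 2 * Real.log (|f x| / √(∫ y, f y ^ 2 ∂μ)) ∂μ ≤ C * ∫ x, ‖fderiv ℝ f x‖ ^ 2 ∂μ

lemma BoundedC1.exp_const_mul {f : E → ℝ} (hf : BoundedC1 f) (c : ℝ) :
    BoundedC1 fun x ↦ Real.exp (c * f x) := by
  obtain ⟨hf₁, ⟨M, hM⟩, K, hK⟩ := hf
  have exp_le (x : E) : Real.exp (c * f x) ≤ Real.exp (|c| * M) :=
    Real.exp_le_exp.2 <| (le_abs_self _).trans <|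
      (abs_mul c (f x)).trans_le <| mul_le_mul_of_nonneg_left (hM x) (abs_nonneg c)
  refine ⟨by fun_prop, ⟨Real.exp (|c| * M), fun x ↦ (Real.abs_exp _).trans_le (exp_le x)⟩,
    Real.exp (|c| * M) * (|c| * K), fun x ↦ ?_⟩
  rw [norm_fderiv_exp_const_mul (hf₁.differentiable one_ne_zero x)]
  exact mul_le_mul (exp_le x) (mul_le_mul_of_nonneg_left (hK x) (abs_nonneg c)) (by positivity)
    (Real.exp_pos _).le

variable [MeasurableSpace E] {μ : Measure E} {C K : ℝ} {f : E → ℝ}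

lemma integral_norm_fderiv_exp_sq_le (hf : Differentiable ℝ f) (hK : ∀ x, ‖fderiv ℝ f x‖ ≤ K)
    {t : ℝ} (ht : t ∈ integrableExpSet f μ) :
    ∫ x, ‖fderiv ℝ (fun y ↦ Real.exp (t / 2 * f y)) x‖ ^ 2 ∂μ
      ≤ K ^ 2 * t ^ 2 / 4 * mgf f μ t := by
  rw [mgf, ← integral_const_mul]
  refine integral_mono_of_nonneg (ae_of_all _ fun x ↦ by positivity)
    (Integrable.const_mul ht _) (ae_of_all _ fun x ↦ ?_)
  calc
    ‖fderiv ℝ (fun y ↦ Real.exp (t / 2 * f y)) x‖ ^ 2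
        = ‖fderiv ℝ f x‖ ^ 2 * t ^ 2 / 4 * Real.exp (t * f x) := by
      rw [norm_fderiv_exp_const_mul (hf x), mul_pow, mul_pow, sq_abs, exp_half_mul_sq]
      ring
    _ ≤ K ^ 2 * t ^ 2 / 4 * Real.exp (t * f x) := by
      gcongr
      exact hK x

lemma SatisfiesLSI.mul_deriv_cgf_le [NeZero μ] (hLSI : SatisfiesLSI μ C) (hC : 0 ≤ C)
    (hf : BoundedC1 f) (hK : ∀ x, ‖fderiv ℝ f x‖ ≤ K) {t : ℝ}
    (ht : t ∈ interior (integrableExpSet f μ)) :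
    t * deriv (cgf f μ) t ≤ cgf f μ t + C * K ^ 2 / 2 * t ^ 2 := by
  have ht_mem : t ∈ integrableExpSet f μ := interior_subset ht
  have hpos : 0 < mgf f μ t := mgf_pos' (NeZero.ne μ) ht_mem
  have hscaled : mgf f μ t / 2 * (t * deriv (cgf f μ) t - cgf f μ t)
      ≤ mgf f μ t / 2 * (C * K ^ 2 / 2 * t ^ 2) :=
    calc
      _ ≤ C * ∫ x, ‖fderiv ℝ (fun y ↦ Real.exp (t / 2 * f y)) x‖ ^ 2 ∂μ :=
        (integral_exp_sq_mul_log_eq ht).symm.trans_le (hLSI _ (hf.exp_const_mul (t / 2)))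
      _ ≤ C * (K ^ 2 * t ^ 2 / 4 * mgf f μ t) := by
        gcongr
        exact integral_norm_fderiv_exp_sq_le (hf.1.differentiable one_ne_zero) hK ht_mem
      _ = mgf f μ t / 2 * (C * K ^ 2 / 2 * t ^ 2) := by ring
  exact sub_le_iff_le_add'.1 (le_of_mul_le_mul_left hscaled (half_pos hpos))

variable [OpensMeasurableSpace E] [IsFiniteMeasure μ]

lemma BoundedC1.integrableExpSet_eq_univ (hf : BoundedC1 f) : integrableExpSet f μ = Set.univ := by
  obtain ⟨hf₁, ⟨M, hM⟩, -⟩ := hf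
  exact Set.eq_univ_of_forall fun _ ↦
    integrable_exp_mul_of_mem_Icc hf₁.continuous.aemeasurable (ae_of_all μ fun x ↦ abs_le.1 (hM x))

lemma SatisfiesLSI.cgf_mul_le [NeZero μ] (hLSI : SatisfiesLSI μ C) (hC : 0 ≤ C)
    (hf : BoundedC1 f) (hK : ∀ x, ‖fderiv ℝ f x‖ ≤ K) {s : ℝ} (hs : 1 ≤ s) (t : ℝ) :
    cgf f μ (s * t) ≤ s * cgf f μ t + C * K ^ 2 * (s * (s - 1) / 2) * t ^ 2 := by
  have mem_interior (r : ℝ) : r ∈ interior (integrableExpSet f μ) := by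
    simp [hf.integrableExpSet_eq_univ]
  convert apply_mul_le_of_mul_deriv_le (fun r ↦ (analyticAt_cgf (mem_interior r)).differentiableAt)
    (fun r ↦ hLSI.mul_deriv_cgf_le hC hf hK (mem_interior r)) hs t using 1
  ring

theorem herbst_doubling_of_LSI_general (hLSI : SatisfiesLSI μ C) (hC : 0 ≤ C)
    (hf : BoundedC1 f) (hK : ∀ x, ‖fderiv ℝ f x‖ ≤ K) {s : ℝ} (hs : 1 ≤ s) (t : ℝ) :
    ∫ x, Real.exp (s * t * f x) ∂μ
      ≤ Real.exp (C * K ^ 2 * (s * (s - 1) / 2) * t ^ 2) * (∫ x, Real.exp (t * f x) ∂μ) ^ s := by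
  rcases eq_zero_or_neZero μ with rfl | _
  · simp only [integral_zero_measure]
    positivity
  have exp_cgf_eq (r : ℝ) : Real.exp (cgf f μ r) = mgf f μ r :=
    exp_cgf <| hf.integrableExpSet_eq_univ.ge (Set.mem_univ r)
  calc
    mgf f μ (s * t) = Real.exp (cgf f μ (s * t)) := (exp_cgf_eq _).symm
    _ ≤ Real.exp (s * cgf f μ t + C * K ^ 2 * (s * (s - 1) / 2) * t ^ 2) :=
      Real.exp_le_exp.2 (hLSI.cgf_mul_le hC hf hK hs t)
    _ = Real.exp (C * K ^ 2 * (s * (s - 1) / 2) * t ^ 2) * mgf f μ t ^ s := by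
      rw [add_comm, Real.exp_add, mul_comm s (cgf f μ t), Real.exp_mul (cgf f μ t), exp_cgf_eq]

end LogSobolev

section Euclidean

variable {d : ℕ}

lemma c1b_iff_boundedC1 (f : EuclideanSpace ℝ (Fin d) → ℝ) : C1b f ↔ BoundedC1 f := by
  simp only [C1b, BoundedC1, norm_gradient_eq_norm_fderiv]

lemma l2Norm_eq_sqrt (μ : Measure (EuclideanSpace ℝ (Fin d)))
    (f : EuclideanSpace ℝ (Fin d) → ℝ) : L2Norm μ f = √(∫ x, f x ^ 2 ∂μ) := by
  simp only [L2Norm, Real.rpow_two, sq_abs, Real.sqrt_eq_rpow]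

lemma satisfiesLSI_iff_forall_c1b (μ : Measure (EuclideanSpace ℝ (Fin d))) (C : ℝ) :
    SatisfiesLSI μ C ↔ ∀ f : EuclideanSpace ℝ (Fin d) → ℝ, C1b f →
      ∫ x, (f x) ^ 2 * Real.log (|f x| / L2Norm μ f) ∂μ
        ≤ C * ∫ x, ‖gradient f x‖ ^ 2 ∂μ := by
  simp only [SatisfiesLSI, c1b_iff_boundedC1, l2Norm_eq_sqrt, norm_gradient_eq_norm_fderiv]

end Euclidean

/-- if `μ` satisfies a logarithmic Sobolev inequality with constant `C > 0`,
then for every `f ∈ C¹_b(ℝ^d)` with `|∇f| ≤ 1` and every `λ > 0`,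
`∫ e^{2λf} dμ ≤ e^{Cλ²} (∫ e^{λf} dμ)²`. -/
theorem herbst_doubling_of_LSI
    {d : ℕ} (μ : Measure (EuclideanSpace ℝ (Fin d))) [IsProbabilityMeasure μ]
    (C : ℝ) (hC : 0 < C)
    (hLSI : ∀ f : EuclideanSpace ℝ (Fin d) → ℝ, C1b f →
      ∫ x, (f x) ^ 2 * Real.log (|f x| / L2Norm μ f) ∂μ
        ≤ C * ∫ x, ‖gradient f x‖ ^ 2 ∂μ) :
    ∀ f : EuclideanSpace ℝ (Fin d) → ℝ, C1b f → (∀ x, ‖gradient f x‖ ≤ 1) →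
      ∀ lam > (0 : ℝ),
        ∫ x, Real.exp (2 * lam * f x) ∂μ
          ≤ Real.exp (C * lam ^ 2) * (∫ x, Real.exp (lam * f x) ∂μ) ^ 2 := by
  intro f hf hgrad lam _
  simpa [show (2 : ℝ) - 1 = 1 by norm_num] using herbst_doubling_of_LSI_general (K := 1)
    ((satisfiesLSI_iff_forall_c1b μ C).2 hLSI) hC.le ((c1b_iff_boundedC1 f).1 hf)
    (by simpa only [norm_gradient_eq_norm_fderiv] using hgrad) one_le_two lam
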